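/- Let G be a finite simple gap-free graph with nonzero 4-path ideal I_4(G), let e = xy be an edge of G, and let G' be the simple graph whose edge ideal equals (I_4(G) : x_x x_y). Then every induced cycle of length at least five in the complement graph (G')^c is also an induced cycle in the complement graph G^c. -/

import Mathlib

open MvPolynomial

/-! Graph-theoretic definitions -/

/-- A list of vertices is a path in `G`: consecutive vertices are adjacent and all
vertices are distinct. -/
def SimpleGraph.IsPathList {V : Type*} (G : SimpleGraph V) (l : List V) : Prop :=
  l.Chain' G.Adj ∧ l.Nodup

/-- The `t`-path ideal of a graph: the ideal generated by the monomials
`x_{v_1} ⋯ x_{v_t}` where `v_1 ⋯ v_t` is a path on `t` distinct vertices of `G`. -/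
noncomputable def pathIdeal {V K : Type*} [CommRing K] (G : SimpleGraph V) (t : ℕ) :
    Ideal (MvPolynomial V K) :=
  Ideal.span { p | ∃ l : List V, G.IsPathList l ∧ l.length = t ∧ p = (l.map X).prod }

/-- The edge ideal of a graph. -/
noncomputable def edgeIdeal {V K : Type*} [CommRing K] (G : SimpleGraph V) :
    Ideal (MvPolynomial V K) :=
  Ideal.span { p | ∃ u v, G.Adj u v ∧ p = X u * X v }

/-- `G` is gap-free: any two vertex-disjoint edges are joined by an edge. -/
def SimpleGraph.GapFree {V : Type*} (G : SimpleGraph V) : Prop :=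
  ∀ a b c d : V, G.Adj a b → G.Adj c d → a ≠ c → a ≠ d → b ≠ c → b ≠ d →
    (G.Adj a c ∨ G.Adj a d ∨ G.Adj b c ∨ G.Adj b d)

/-- `G` is claw-free: it has no induced `K_{1,3}`. -/
def SimpleGraph.ClawFree {V : Type*} (G : SimpleGraph V) : Prop :=
  ∀ v a b c : V, G.Adj v a → G.Adj v b → G.Adj v c → a ≠ b → a ≠ c → b ≠ c →
    (G.Adj a b ∨ G.Adj a c ∨ G.Adj b c)

/-- `G` is cricket-free: it has no induced cricket. -/
def SimpleGraph.CricketFree {V : Type*} (G : SimpleGraph V) : Prop :=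
  ¬ ∃ w1 w2 w3 w4 w5 : V,
      w1 ≠ w2 ∧ w1 ≠ w3 ∧ w1 ≠ w4 ∧ w1 ≠ w5 ∧ w2 ≠ w3 ∧ w2 ≠ w4 ∧ w2 ≠ w5 ∧
      w3 ≠ w4 ∧ w3 ≠ w5 ∧ w4 ≠ w5 ∧
      G.Adj w1 w3 ∧ G.Adj w2 w3 ∧ G.Adj w3 w4 ∧ G.Adj w3 w5 ∧ G.Adj w4 w5 ∧
      ¬ G.Adj w1 w2 ∧ ¬ G.Adj w1 w4 ∧ ¬ G.Adj w1 w5 ∧ ¬ G.Adj w2 w4 ∧ ¬ G.Adj w2 w5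

/-- `w : Fin n → V` is an induced cycle of length `n` in `H`. -/
def SimpleGraph.IsInducedCycle {V : Type*} (H : SimpleGraph V) {n : ℕ} (w : Fin n → V) :
    Prop :=
  3 ≤ n ∧ Function.Injective w ∧
    ∀ i j : Fin n, H.Adj (w i) (w j) ↔
      ((j : ℕ) = ((i : ℕ) + 1) % n ∨ (i : ℕ) = ((j : ℕ) + 1) % n)

/-- A graph is chordal if it has no induced cycle of length at least four. -/
def SimpleGraph.Chordal {V : Type*} (H : SimpleGraph V) : Prop :=
  ∀ (n : ℕ), 4 ≤ n → ∀ w : Fin n → V, ¬ H.IsInducedCycle w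

/-! Monomial ideals, graded Betti numbers via the Taylor complex, and
Castelnuovo–Mumford regularity. -/

/-- The monomial ideal generated by the monomials with exponent vectors `gens`. -/
noncomputable def monomialSpan {V K : Type*} [CommRing K] {k : ℕ}
    (gens : Fin k → (V →₀ ℕ)) : Ideal (MvPolynomial V K) :=
  Ideal.span (Set.range fun i => monomial (gens i) (1 : K))

/-- The total degree of an exponent vector. -/
def monomialDegree {V : Type*} (m : V →₀ ℕ) : ℕ := m.sum fun _ n => n

/-- `m` is a minimal monomial generator of the monomial ideal `I`. -/
def IsMinimalMonomialGen {V K : Type*} [CommRing K] (I : Ideal (MvPolynomial V K))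
    (m : V →₀ ℕ) : Prop :=
  monomial m (1 : K) ∈ I ∧ ∀ m' : V →₀ ℕ, m' ≤ m → m' ≠ m → monomial m' (1 : K) ∉ I

/-- The lcm of the monomials `gens i`, `i ∈ T`. -/
noncomputable def taylorLcm {V : Type*} {k : ℕ} (gens : Fin k → (V →₀ ℕ))
    (T : Finset (Fin k)) : V →₀ ℕ :=
  T.sup gens

open Classical in
/-- The boundary of a basis element of the Taylor complex of `gens`, tensored with the
residue field `K`: only the terms where the lcm is unchanged survive. -/
noncomputable def taylorBoundary {V K : Type*} [Field K] {k : ℕ}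
    (gens : Fin k → (V →₀ ℕ)) (T : Finset (Fin k)) : Finset (Fin k) →₀ K :=
  ∑ t ∈ T, if taylorLcm gens (T.erase t) = taylorLcm gens T then
      ((-1 : K) ^ (T.filter fun s => s < t).card) • Finsupp.single (T.erase t) (1 : K)
    else 0

/-- The differential of the Taylor complex of `gens` tensored with `K`. -/
noncomputable def taylorDiff {V K : Type*} [Field K] {k : ℕ}
    (gens : Fin k → (V →₀ ℕ)) : (Finset (Fin k) →₀ K) →ₗ[K] (Finset (Fin k) →₀ K) :=
  Finsupp.lsum K fun T =>
    LinearMap.toSpanSingleton K (Finset (Fin k) →₀ K) (taylorBoundary gens T)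

/-- The graded piece of the Taylor complex in homological degree `i` and internal
degree `j`. -/
noncomputable def taylorPiece {V K : Type*} [Field K] {k : ℕ}
    (gens : Fin k → (V →₀ ℕ)) (i j : ℕ) : Submodule K (Finset (Fin k) →₀ K) :=
  Submodule.span K { f | ∃ T : Finset (Fin k), T.card = i ∧
    monomialDegree (taylorLcm gens T) = j ∧ f = Finsupp.single T (1 : K) }

/-- Nonvanishing of the degree-`j` part of the `i`-th homology of the Taylor complex
of `gens` tensored with `K`; since the Taylor complex is a graded free resolution of
`S/I` (where `I` is the ideal generated by the monomials `gens`), this says exactly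
that `Tor_i^S(S/I, K)_j ≠ 0`. -/
noncomputable def taylorHomologyNonzero {V K : Type*} [Field K] {k : ℕ}
    (gens : Fin k → (V →₀ ℕ)) (i j : ℕ) : Prop :=
  ¬ (LinearMap.ker (taylorDiff (K := K) gens) ⊓ taylorPiece (K := K) gens i j ≤
      Submodule.map (taylorDiff (K := K) gens) (taylorPiece (K := K) gens (i + 1) j))

/-- For a monomial ideal `I`, `Tor_i^S(I, K)_j ≠ 0`.  (Since
`Tor_i^S(I,K) ≅ Tor_{i+1}^S(S/I,K)`, this is computed from the Taylor complex on any
family of monomial generators of `I`.) -/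
def IdealTorNonzero {V K : Type*} [Field K] (I : Ideal (MvPolynomial V K))
    (i j : ℕ) : Prop :=
  ∃ (k : ℕ) (gens : Fin k → (V →₀ ℕ)), I = monomialSpan gens ∧
    taylorHomologyNonzero (K := K) gens (i + 1) j

/-- The Castelnuovo–Mumford regularity of a monomial ideal `I`:
`reg I = max { j - i : Tor_i^S(I, K)_j ≠ 0 }`. -/
noncomputable def reg {V K : Type*} [Field K] (I : Ideal (MvPolynomial V K)) : ℕ :=
  sSup { d | ∃ i j : ℕ, IdealTorNonzero I i j ∧ d = j - i }

/-!
The end edges `ab`, `cd` of a path `abcd` form a perfect matching of its vertices. So for `u`, `v`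
outside the edge `xy`, a 4-path on `{u, v, x, y}` yields one of the matchings `{uv, xy}`,
`{ux, vy}`, `{uy, vx}`. Conversely each of these extends to such a path: the first one because `uv`
and `xy` form no gap, the others through the edge `xy`. Hence `G'` arises from `G` by isolating `x`
and `y` and joining `N(x)` to `N(y)`.

Let `C` be an induced cycle of `(G')ᶜ` of length at least four. Vertices consecutive on `C` are
not adjacent in `G'`, so no edge of `C` joins `N(x)` to `N(y)`. The vertices of `C` outside
`N(x) ∪ N(y)` are independent in `G` because `xy` forms no gap, hence also in `G'`, so they form a
clique of the cycle `C`, i.e. lie on one edge of `C`. The rest of `C` is a path, which lies entirely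
in `N(x)` or entirely in `N(y)`, and every vertex of `C` has a neighbour on it. So `C` meets only
one of `N(x)` and `N(y)`, and `G` and `G'` agree on `C`.
-/

section PathIdeal

variable {V K : Type*}

lemma prod_map_X_eq_monomial_toFinsupp [DecidableEq V] [CommSemiring K] (m : Multiset V) :
    (m.map X).prod = monomial (Multiset.toFinsupp m) (1 : K) := by
  induction m using Multiset.induction_on with
  | empty => simp
  | cons a m ih =>
    rw [Multiset.map_cons, Multiset.prod_cons, ih, ← Multiset.singleton_add, map_add,
      Multiset.toFinsupp_singleton, X, monomial_mul, one_mul]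

lemma prod_map_X_mem_span_image_iff [CommSemiring K] [Nontrivial K] {S : Set (Multiset V)}
    {m : Multiset V} :
    (m.map X).prod ∈ Ideal.span ((fun s : Multiset V ↦ (s.map (X (R := K))).prod) '' S) ↔
      ∃ s ∈ S, s ≤ m := by
  classical
  have toFinsupp_le {s : Multiset V} : Multiset.toFinsupp s ≤ Multiset.toFinsupp m ↔ s ≤ m :=
    Finsupp.orderIsoMultiset.symm.le_iff_le
  simp only [prod_map_X_eq_monomial_toFinsupp]
  rw [← Function.comp_def (monomial · (1 : K)), Set.image_comp, mem_ideal_span_monomial_image,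
    support_monomial, if_neg one_ne_zero]
  simp only [Finset.mem_singleton, forall_eq, Set.exists_mem_image, toFinsupp_le]

variable [CommRing K]

lemma pathIdeal_eq_span_image (G : SimpleGraph V) (t : ℕ) :
    pathIdeal (K := K) G t = Ideal.span ((fun s : Multiset V ↦ (s.map X).prod) ''
      ((↑) '' {l : List V | G.IsPathList l ∧ l.length = t})) := by
  rw [pathIdeal, Set.image_image]
  congr 1
  ext p
  simp [and_assoc, eq_comm]

lemma prod_map_X_mem_pathIdeal_iff [Nontrivial K] {G : SimpleGraph V} {m : List V} :
    (m.map X).prod ∈ pathIdeal (K := K) G m.length ↔ ∃ l, G.IsPathList l ∧ l.Perm m := by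
  rw [pathIdeal_eq_span_image, ← Multiset.prod_coe, ← Multiset.map_coe,
    prod_map_X_mem_span_image_iff, Set.exists_mem_image]
  constructor
  · rintro ⟨l, ⟨hl, hlen⟩, hle⟩
    exact ⟨l, hl, (Multiset.coe_le.1 hle).perm_of_length_le hlen.ge⟩
  · rintro ⟨l, hl, hperm⟩
    exact ⟨l, ⟨hl, hperm.length_eq⟩, Multiset.coe_le.2 hperm.subperm⟩

lemma isPathList_iff {G : SimpleGraph V} {l : List V} :
    G.IsPathList l ↔ l.IsChain G.Adj ∧ l.Nodup :=
  Iff.rfl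

lemma isPathList_pair_iff {G : SimpleGraph V} {u v : V} : G.IsPathList [u, v] ↔ G.Adj u v := by
  simpa [isPathList_iff] using SimpleGraph.Adj.ne

lemma isPathList_quadruple_iff {G : SimpleGraph V} {a b c d : V} :
    G.IsPathList [a, b, c, d] ↔
      G.Adj a b ∧ G.Adj b c ∧ G.Adj c d ∧ [a, b, c, d].Nodup := by
  simp [isPathList_iff, and_assoc]

lemma edgeIdeal_eq_pathIdeal_two (G : SimpleGraph V) :
    edgeIdeal (K := K) G = pathIdeal G 2 := by
  rw [edgeIdeal, pathIdeal]
  congr 1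
  ext p
  constructor
  · rintro ⟨u, v, huv, rfl⟩
    exact ⟨[u, v], isPathList_pair_iff.2 huv, rfl, by simp⟩
  · rintro ⟨l, hl, hlen, rfl⟩
    obtain ⟨u, v, rfl⟩ := List.length_eq_two.1 hlen
    exact ⟨u, v, isPathList_pair_iff.1 hl, by simp⟩

lemma X_mul_X_mem_edgeIdeal_iff [Nontrivial K] {G : SimpleGraph V} {u v : V} :
    X u * X v ∈ edgeIdeal (K := K) G ↔ G.Adj u v := by
  rw [edgeIdeal_eq_pathIdeal_two]
  calc X u * X v ∈ pathIdeal (K := K) G 2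
    _ ↔ ∃ l, G.IsPathList l ∧ l.Perm [u, v] := by
      simpa using prod_map_X_mem_pathIdeal_iff (K := K) (G := G) (m := [u, v])
    _ ↔ G.Adj u v := by
      simp [List.perm_pair, and_or_left, exists_or, isPathList_pair_iff, G.adj_comm]

end PathIdeal

section CycleGraph

open SimpleGraph
open scoped Fin.CommRing

variable {m : ℕ}

lemma natCast_fin_ne_zero {n d : ℕ} [NeZero n] (hd : d ≠ 0) (hdn : d < n) : (d : Fin n) ≠ 0 :=
  mt Fin.natCast_eq_zero.1 (Nat.not_dvd_of_pos_of_lt (Nat.pos_of_ne_zero hd) hdn)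

lemma fin_two_ne_zero : (2 : Fin (m + 3)) ≠ 0 :=
  natCast_fin_ne_zero (d := 2) (by omega) (by omega)

lemma fin_three_ne_zero : (3 : Fin (m + 4)) ≠ 0 :=
  natCast_fin_ne_zero (d := 3) (by omega) (by omega)

lemma cycleGraph_adj_iff_eq_add_one {n : ℕ} {i j : Fin (n + 2)} :
    (cycleGraph (n + 2)).Adj i j ↔ i = j + 1 ∨ j = i + 1 := by
  rw [cycleGraph_adj, sub_eq_iff_eq_add', sub_eq_iff_eq_add']

lemma isInducedCycle_iff_comap_eq_cycleGraph {V : Type*} {H : SimpleGraph V} {n : ℕ}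
    {w : Fin n → V} :
    H.IsInducedCycle w ↔ 3 ≤ n ∧ Function.Injective w ∧ H.comap w = cycleGraph n := by
  refine and_congr_right fun hn ↦ and_congr_right fun _ ↦ ?_
  obtain ⟨m, rfl⟩ := Nat.exists_eq_add_of_le' hn
  simp only [SimpleGraph.ext_iff, funext_iff, comap_adj, cycleGraph_adj_iff_eq_add_one (n := m + 1),
    Fin.ext_iff, Fin.val_add, eq_iff_iff]
  exact forall₂_congr fun i j ↦ iff_congr Iff.rfl Or.comm

lemma compl_isInducedCycle_iff_comap_eq_compl_cycleGraph {V : Type*} {H : SimpleGraph V} {n : ℕ}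
    {w : Fin n → V} :
    Hᶜ.IsInducedCycle w ↔ 3 ≤ n ∧ Function.Injective w ∧ H.comap w = (cycleGraph n)ᶜ := by
  rw [isInducedCycle_iff_comap_eq_cycleGraph]
  refine and_congr_right fun _ ↦ and_congr_right fun hw ↦ ?_
  have comap_compl : Hᶜ.comap w = (H.comap w)ᶜ := by
    ext i j
    simp [hw.ne_iff]
  rw [comap_compl, compl_eq_comm, eq_comm]

lemma add_two_notMem_pair (k : Fin (m + 3)) : k + 2 ∉ ({k, k + 1} : Set _) := by
  have h : (2 : Fin (m + 3)) ≠ 1 := by rw [← one_add_one_eq_two]; simp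
  simp [fin_two_ne_zero, h]

lemma compl_cycleGraph_adj_add_two (i : Fin (m + 4)) :
    (cycleGraph (m + 4))ᶜ.Adj i (i + 2) := by
  have hpair := add_two_notMem_pair i
  rw [Set.mem_insert_iff, Set.mem_singleton_iff, not_or] at hpair
  have h3 : i ≠ i + 2 + 1 := by
    rw [add_assoc, two_add_one_eq_three]
    simp [fin_three_ne_zero]
  rw [compl_adj, cycleGraph_adj_iff_eq_add_one]
  exact ⟨Ne.symm hpair.1, not_or.2 ⟨h3, hpair.2⟩⟩

lemma exists_subset_pair_of_isClique_cycleGraph {s : Set (Fin (m + 4))}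
    (hs : (cycleGraph (m + 4)).IsClique s) : ∃ k, s ⊆ {k, k + 1} := by
  have h3 := fin_three_ne_zero (m := m)
  have eq_or_succ {i j} (hi : i ∈ s) (hj : j ∈ s) : i = j ∨ i = j + 1 ∨ j = i + 1 :=
    or_iff_not_imp_left.2 fun hij ↦ cycleGraph_adj_iff_eq_add_one.1 (hs hi hj hij)
  by_cases h : ∃ k ∈ s, k + 1 ∈ s
  · obtain ⟨k, hk, hk'⟩ := h
    refine ⟨k, fun j hj ↦ ?_⟩
    have h1 := eq_or_succ hj hk
    have h2 := eq_or_succ hj hk'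
    simp only [Set.mem_insert_iff, Set.mem_singleton_iff]
    grind
  · obtain rfl | ⟨k, hk⟩ := s.eq_empty_or_nonempty
    · exact ⟨0, Set.empty_subset _⟩
    · exact ⟨k, fun j hj ↦ by grind⟩

lemma compl_pair_subset_of_add_two_mem {n : ℕ} {k : Fin (n + 2)} {s : Set (Fin (n + 2))}
    (hk : k + 2 ∈ s) (hsucc : ∀ i ∈ s, i + 1 ∉ ({k, k + 1} : Set _) → i + 1 ∈ s) :
    {k, k + 1}ᶜ ⊆ s := by
  have add_natCast_mem (d : ℕ) (hd : 2 ≤ d) : d < n + 2 → k + (d : Fin (n + 2)) ∈ s := by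
    induction d, hd using Nat.le_induction with
    | base => exact fun _ ↦ hk
    | succ d hd ih =>
      intro hdn
      have hd0 : (d : Fin (n + 2)) ≠ 0 := natCast_fin_ne_zero (by omega) (by omega)
      have hd1 : ((d + 1 : ℕ) : Fin (n + 2)) ≠ 0 := natCast_fin_ne_zero d.succ_ne_zero hdn
      rw [Nat.cast_succ] at hd1 ⊢
      rw [← add_assoc]
      refine hsucc _ (ih (by omega)) ?_
      simp [add_assoc, hd0, hd1]
  intro j hj
  obtain ⟨d, hd, rfl⟩ : ∃ d < n + 2, j = k + (d : Fin (n + 2)) :=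
    ⟨(j - k).val, (j - k).isLt, by simp⟩
  refine add_natCast_mem d (not_lt.1 fun hlt ↦ hj ?_) hd
  interval_cases d <;> simp

lemma exists_adj_notMem_pair (j k : Fin (m + 4)) :
    ∃ i, (cycleGraph (m + 4)).Adj i j ∧ i ∉ ({k, k + 1} : Set _) := by
  have h2 := fin_two_ne_zero (m := m + 1)
  have h3 := fin_three_ne_zero (m := m)
  simp only [cycleGraph_adj_iff_eq_add_one (n := m + 2), Set.mem_insert_iff, Set.mem_singleton_iff]
  by_cases h : j + 1 = k ∨ j + 1 = k + 1
  · exact ⟨j - 1, by grind, by grind⟩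
  · exact ⟨j + 1, .inl rfl, h⟩

lemma eq_empty_of_compl_union_subset_pair {k : Fin (m + 4)} {s t : Set (Fin (m + 4))}
    (hst : ∀ i j, (cycleGraph (m + 4)).Adj i j → i ∈ s → j ∉ t)
    (hk : (s ∪ t)ᶜ ⊆ {k, k + 1}) (hks : k + 2 ∈ s) : t = ∅ := by
  have hs : {k, k + 1}ᶜ ⊆ s := by
    refine compl_pair_subset_of_add_two_mem hks fun i hi hi' ↦ ?_
    have hnt : i + 1 ∉ t := hst i (i + 1) (cycleGraph_adj_iff_eq_add_one.2 (.inr rfl)) hi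
    by_contra hns
    exact hi' (hk fun h ↦ h.elim hns hnt)
  refine Set.eq_empty_of_forall_notMem fun j ↦ ?_
  obtain ⟨i, hij, hik⟩ := exists_adj_notMem_pair j k
  exact hst i j hij (hs hik)

lemma eq_empty_or_eq_empty_of_isClique_compl_union {s t : Set (Fin (m + 4))}
    (hst : ∀ i j, (cycleGraph (m + 4)).Adj i j → i ∈ s → j ∉ t)
    (hclique : (cycleGraph (m + 4)).IsClique (s ∪ t)ᶜ) : s = ∅ ∨ t = ∅ := by
  obtain ⟨k, hk⟩ := exists_subset_pair_of_isClique_cycleGraph hclique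
  have hk2 : k + 2 ∈ s ∪ t := by
    by_contra h
    exact add_two_notMem_pair k (hk h)
  obtain hs | ht := hk2
  · exact .inr (eq_empty_of_compl_union_subset_pair hst hk hs)
  · rw [Set.union_comm] at hk
    exact .inl <| eq_empty_of_compl_union_subset_pair
      (fun i j hij hi hj ↦ hst j i hij.symm hj hi) hk ht

end CycleGraph

section PathColonGraph

variable {V : Type*} {G : SimpleGraph V} {u v x y : V}

/-- The graph with edge ideal `(I_4(G) : x_x x_y)` for gap-free `G` and an edge `xy` of `G`: two
vertices `u`, `v` outside `{x, y}` are adjacent if they are adjacent in `G` or if `G` has a perfect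
matching between `{u, v}` and `{x, y}`. -/
def pathColonGraph (G : SimpleGraph V) (x y : V) : SimpleGraph V where
  Adj u v := [u, v, x, y].Nodup ∧
    (G.Adj u v ∨ (G.Adj u x ∧ G.Adj v y) ∨ (G.Adj u y ∧ G.Adj v x))
  symm := ⟨fun u v h ↦ ⟨(List.Perm.swap v u [x, y]).nodup_iff.1 h.1,
    h.2.imp SimpleGraph.Adj.symm fun hcross ↦ hcross.symm.imp And.symm And.symm⟩⟩
  loopless := ⟨by simp⟩

lemma pathColonGraph_adj_iff : (pathColonGraph G x y).Adj u v ↔ [u, v, x, y].Nodup ∧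
    (G.Adj u v ∨ (G.Adj u x ∧ G.Adj v y) ∨ (G.Adj u y ∧ G.Adj v x)) :=
  Iff.rfl

lemma ne_and_ne_of_pathColonGraph_adj (h : (pathColonGraph G x y).Adj u v) : u ≠ x ∧ u ≠ y := by
  have hnotMem := (List.nodup_cons.1 h.1).1
  simp only [List.mem_cons, not_or] at hnotMem
  exact ⟨hnotMem.2.1, hnotMem.2.2.1⟩

lemma adj_and_adj_or_of_perm {a b c d : V} (hab : G.Adj a b) (hcd : G.Adj c d)
    (hperm : [a, b, c, d].Perm [u, v, x, y]) (hnodup : [u, v, x, y].Nodup) :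
    (G.Adj u v ∧ G.Adj x y) ∨ (G.Adj u x ∧ G.Adj v y) ∨ (G.Adj u y ∧ G.Adj v x) := by
  have hba := hab.symm
  have hdc := hcd.symm
  have hmem {z} (hz : z ∈ [u, v, x, y]) : z ∈ [a, b, c, d] := hperm.mem_iff.2 hz
  have hu := hmem (z := u) (by simp)
  have hv := hmem (z := v) (by simp)
  have hx := hmem (z := x) (by simp)
  have hy := hmem (z := y) (by simp)
  simp only [List.nodup_cons, List.mem_cons, List.not_mem_nil, or_false, not_or]
    at hnodup hu hv hx hy
  clear hperm hmem
  grind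

lemma exists_isPathList_perm_iff_pathColonGraph_adj (hgap : G.GapFree) (hxy : G.Adj x y) :
    (∃ l, G.IsPathList l ∧ l.Perm [u, v, x, y]) ↔ (pathColonGraph G x y).Adj u v := by
  rw [pathColonGraph_adj_iff]
  constructor
  · rintro ⟨l, hl, hperm⟩
    obtain ⟨a, b, c, d, rfl⟩ := List.length_eq_four.1 hperm.length_eq
    obtain ⟨hab, -, hcd, hnodup⟩ := isPathList_quadruple_iff.1 hl
    have hnodup' := hperm.nodup_iff.1 hnodup
    exact ⟨hnodup', (adj_and_adj_or_of_perm hab hcd hperm hnodup').imp_left And.left⟩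
  · rintro ⟨hnodup, hadj⟩
    have path {a b c d} (hab : G.Adj a b) (hbc : G.Adj b c) (hcd : G.Adj c d)
        (hperm : [a, b, c, d].Perm [u, v, x, y]) : ∃ l, G.IsPathList l ∧ l.Perm [u, v, x, y] :=
      ⟨_, isPathList_quadruple_iff.2 ⟨hab, hbc, hcd, hperm.nodup_iff.2 hnodup⟩, hperm⟩
    obtain huv | ⟨hux, hvy⟩ | ⟨huy, hvx⟩ := hadj
    · have huv' : (pathColonGraph G x y).Adj u v := ⟨hnodup, .inl huv⟩
      obtain ⟨hux, huy⟩ := ne_and_ne_of_pathColonGraph_adj huv'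
      obtain ⟨hvx, hvy⟩ := ne_and_ne_of_pathColonGraph_adj huv'.symm
      obtain hux | huy | hvx | hvy := hgap u v x y huv hxy hux huy hvx hvy
      · exact path huv.symm hux hxy (.swap u v _)
      · exact path huv.symm huy hxy.symm ((List.Perm.swap u v []).append (.swap x y []))
      · exact path huv hvx hxy .rfl
      · exact path huv hvy hxy.symm ((List.Perm.swap x y []).append_left [u, v])
    · exact path hux hxy hvy.symm ((List.perm_append_comm (l₁ := [x, y])).cons u)
    · exact path huy hxy.symm hvx.symm ((List.reverse_perm [v, x, y]).cons u)

lemma eq_pathColonGraph_of_edgeIdeal_eq_colon {K : Type*} [CommRing K] [Nontrivial K]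
    (hgap : G.GapFree) (hxy : G.Adj x y) {G' : SimpleGraph V}
    (hG' : edgeIdeal (K := K) G' = (pathIdeal (K := K) G 4).colon
      (Ideal.span {X x * X y} : Ideal (MvPolynomial V K))) :
    G' = pathColonGraph G x y := by
  ext u v
  calc G'.Adj u v
    _ ↔ X u * X v * (X x * X y) ∈ pathIdeal (K := K) G 4 := by
      rw [← X_mul_X_mem_edgeIdeal_iff (K := K), hG', Ideal.mem_colon_span_singleton]
    _ ↔ ∃ l, G.IsPathList l ∧ l.Perm [u, v, x, y] := by
      simpa [mul_assoc] using prod_map_X_mem_pathIdeal_iff (K := K) (G := G) (m := [u, v, x, y])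
    _ ↔ (pathColonGraph G x y).Adj u v :=
      exists_isPathList_perm_iff_pathColonGraph_adj hgap hxy

end PathColonGraph

section InducedCycle

open SimpleGraph

variable {V : Type*} {G : SimpleGraph V} {x y : V} {m : ℕ} {w : Fin (m + 4) → V}

lemma ne_and_ne_of_comap_pathColonGraph_eq
    (hcomap : (pathColonGraph G x y).comap w = (cycleGraph (m + 4))ᶜ) (i : Fin (m + 4)) :
    w i ≠ x ∧ w i ≠ y := by
  have hadj := compl_cycleGraph_adj_add_two i
  rw [← hcomap, comap_adj] at hadj
  exact ne_and_ne_of_pathColonGraph_adj hadj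

lemma cycleGraph_adj_iff_of_comap_pathColonGraph_eq (hxy : x ≠ y) (hw : Function.Injective w)
    (hcomap : (pathColonGraph G x y).comap w = (cycleGraph (m + 4))ᶜ) {i j : Fin (m + 4)}
    (hij : i ≠ j) :
    (cycleGraph (m + 4)).Adj i j ↔ ¬ G.Adj (w i) (w j) ∧
      ¬ (G.Adj (w i) x ∧ G.Adj (w j) y) ∧ ¬ (G.Adj (w i) y ∧ G.Adj (w j) x) := by
  have hi := ne_and_ne_of_comap_pathColonGraph_eq hcomap i
  have hj := ne_and_ne_of_comap_pathColonGraph_eq hcomap j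
  have hnodup : [w i, w j, x, y].Nodup := by simp [hw.ne hij, hxy, hi, hj]
  rw [← compl_compl (cycleGraph _), ← hcomap, compl_adj, comap_adj, pathColonGraph_adj_iff]
  simp only [hij, hnodup, ne_eq, not_false_eq_true, true_and, not_or]

lemma forall_not_adj_or_forall_not_adj (hgap : G.GapFree) (hxy : G.Adj x y)
    (hw : Function.Injective w)
    (hcomap : (pathColonGraph G x y).comap w = (cycleGraph (m + 4))ᶜ) :
    (∀ i, ¬ G.Adj (w i) x) ∨ ∀ i, ¬ G.Adj (w i) y := by
  have hadj {i j} (hij : i ≠ j) :=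
    cycleGraph_adj_iff_of_comap_pathColonGraph_eq hxy.ne hw hcomap hij
  have hst (i j) (hij : (cycleGraph (m + 4)).Adj i j) (hi : i ∈ {i | G.Adj (w i) x}) :
      j ∉ {j | G.Adj (w j) y} := fun hj ↦ ((hadj hij.ne).1 hij).2.1 ⟨hi, hj⟩
  have hclique :
      (cycleGraph (m + 4)).IsClique ({i | G.Adj (w i) x} ∪ {i | G.Adj (w i) y})ᶜ := by
    intro i hi j hj hij
    rw [Set.mem_compl_iff, Set.mem_union, not_or] at hi hj
    refine (hadj hij).2 ⟨fun hG ↦ ?_, fun h ↦ hi.1 h.1, fun h ↦ hi.2 h.1⟩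
    obtain ⟨hix, hiy⟩ := ne_and_ne_of_comap_pathColonGraph_eq hcomap i
    obtain ⟨hjx, hjy⟩ := ne_and_ne_of_comap_pathColonGraph_eq hcomap j
    obtain h | h | h | h := hgap (w i) (w j) x y hG hxy hix hiy hjx hjy
    exacts [hi.1 h, hi.2 h, hj.1 h, hj.2 h]
  simpa only [Set.eq_empty_iff_forall_notMem, Set.mem_ofPred_eq] using
    eq_empty_or_eq_empty_of_isClique_compl_union hst hclique

lemma compl_isInducedCycle_of_pathColonGraph (hgap : G.GapFree) (hxy : G.Adj x y) {n : ℕ}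
    (hn : 4 ≤ n) {w : Fin n → V} (hw : (pathColonGraph G x y)ᶜ.IsInducedCycle w) :
    Gᶜ.IsInducedCycle w := by
  obtain ⟨m, rfl⟩ := Nat.exists_eq_add_of_le' hn
  rw [compl_isInducedCycle_iff_comap_eq_compl_cycleGraph] at hw ⊢
  obtain ⟨h3, hinj, hcomap⟩ := hw
  refine ⟨h3, hinj, ?_⟩
  ext i j
  obtain rfl | hij := eq_or_ne i j
  · simp
  rw [compl_adj, cycleGraph_adj_iff_of_comap_pathColonGraph_eq hxy.ne hinj hcomap hij]
  obtain hx | hy := forall_not_adj_or_forall_not_adj hgap hxy hinj hcomap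
  · simp [hij, hx]
  · simp [hij, hy]

end InducedCycle

theorem stmt6_general {V K : Type*} [CommRing K] [Nontrivial K] (G : SimpleGraph V)
    (hgap : G.GapFree) (x y : V) (he : G.Adj x y) (G' : SimpleGraph V)
    (hG' : edgeIdeal (K := K) G' =
      (pathIdeal (K := K) G 4).colon (Ideal.span {X x * X y} : Ideal (MvPolynomial V K))) :
    ∀ (n : ℕ), 4 ≤ n → ∀ w : Fin n → V,
      (G'ᶜ).IsInducedCycle w → (Gᶜ).IsInducedCycle w := by
  rw [eq_pathColonGraph_of_edgeIdeal_eq_colon hgap he hG']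
  exact fun n hn w ↦ compl_isInducedCycle_of_pathColonGraph hgap he hn

/-- If `G` is gap-free with `I_4(G) ≠ 0`, `e = xy` is an edge of `G`, and
`G'` is the simple graph whose edge ideal is `(I_4(G) : x_x x_y)`, then every induced
cycle of length at least five in `(G')ᶜ` is an induced cycle in `Gᶜ`. -/
theorem stmt6 {V K : Type*} [Fintype V] [Field K] (G : SimpleGraph V)
    (hgap : G.GapFree) (h4 : pathIdeal (K := K) G 4 ≠ ⊥)
    (x y : V) (he : G.Adj x y) (G' : SimpleGraph V)
    (hG' : edgeIdeal (K := K) G' =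
      Submodule.colon (pathIdeal (K := K) G 4) (Ideal.span {X x * X y} : Ideal (MvPolynomial V K))) :
    ∀ (n : ℕ), 5 ≤ n → ∀ w : Fin n → V,
      (G'ᶜ).IsInducedCycle w → (Gᶜ).IsInducedCycle w :=
  fun n hn ↦ stmt6_general G hgap x y he G' hG' n (by omega)
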